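/- The map Φ_U defines a Lie algebra action of g on U(g1) ⊗_k U(g2): for all g, h ∈ g, Φ_U([g, h]) = Φ_U(g) ∘ Φ_U(h) − Φ_U(h) ∘ Φ_U(g); i.e. Φ_U : g → End_k(U(g1) ⊗_k U(g2)) is a morphism of k-Lie algebras (End with the commutator bracket). -/

import Mathlib

/-!
Write `L x` for left multiplication by `x ∈ g₁` on the first tensor factor. The recursion (b) says
`⁅Φ G, L x⁆ = Φ ⁅G, x⁆`. Two inductions on the first tensor factor, both resting on
`UniversalEnvelopingAlgebra.mem_of_mul_left` (`U(g₁)` is spanned by the iterated left products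
`x₁ ⋯ xₙ · 1`), then give the result:

* `Φ x = L x` for `x ∈ g₁`; hence `Φ ⁅G, x⁆ = ⁅Φ G, Φ x⁆` for every `G`.
* The defect `D(G, H) = Φ ⁅G, H⁆ - ⁅Φ G, Φ H⁆` satisfies, by the Jacobi identity,
  `D(G, H) L x = L x D(G, H) + D(G, ⁅H, x⁆) - D(H, ⁅G, x⁆)`, so it vanishes as soon as all
  `D(G, H)` vanish on `1 ⊗ m`. Since `D` is bilinear, alternating, and zero when an argument is in
  `g₁`, this only has to be checked for `G, H ∈ g₂`, where both sides are `1 ⊗ ⁅G, H⁆ m` by (a).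
-/

open scoped TensorProduct

theorem UniversalEnvelopingAlgebra.ι_lie {k L : Type*} [CommRing k] [LieRing L]
    [LieAlgebra k L] (x y : L) : UniversalEnvelopingAlgebra.ι k ⁅x, y⁆ =
      UniversalEnvelopingAlgebra.ι k x * UniversalEnvelopingAlgebra.ι k y -
        UniversalEnvelopingAlgebra.ι k y * UniversalEnvelopingAlgebra.ι k x := by
  let : LieRing (UniversalEnvelopingAlgebra k L) := LieRing.ofAssociativeRing
  rw [LieHom.map_lie, LieRing.of_associative_ring_bracket]

/-- Left induction on the enveloping algebra: a submodule containing `1` and stable under left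
multiplication by generators is everything. -/
theorem UniversalEnvelopingAlgebra.mem_of_mul_left {k L : Type*} [CommRing k] [LieRing L]
    [LieAlgebra k L] (S : Submodule k (UniversalEnvelopingAlgebra k L)) (h1 : 1 ∈ S)
    (hmul : ∀ (x : L), ∀ t ∈ S, UniversalEnvelopingAlgebra.ι k x * t ∈ S)
    (t : UniversalEnvelopingAlgebra k L) : t ∈ S := by
  -- The elements whose left multiplication preserves `S` form a subalgebra containing `L`.
  have key : ∀ a : TensorAlgebra k L, ∀ t ∈ S,
      UniversalEnvelopingAlgebra.mkAlgHom k L a * t ∈ S := by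
    intro a
    induction a using TensorAlgebra.induction with
    | algebraMap r =>
      intro t ht
      rw [AlgHom.commutes, ← Algebra.smul_def]
      exact S.smul_mem r ht
    | ι x =>
      intro t ht
      simpa using hmul x t ht
    | mul a b ha hb =>
      intro t ht
      rw [map_mul, mul_assoc]
      exact ha _ (hb _ ht)
    | add a b ha hb =>
      intro t ht
      rw [map_add, add_mul]
      exact S.add_mem (ha _ ht) (hb _ ht)
  obtain ⟨a, rfl⟩ : ∃ a, UniversalEnvelopingAlgebra.mkAlgHom k L a = t :=
    RingCon.mkₐ_surjective _ t
  simpa using key a 1 h1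

/-- An endomorphism-valued form of left induction: a family of endomorphisms of `U(L) ⊗ M` vanishes
if all its members kill `1 ⊗ m`, and if on `(x t) ⊗ m` they vanish whenever the whole family
vanishes on `t ⊗ m'` for all `m'`. -/
theorem UniversalEnvelopingAlgebra.family_eq_zero {k L M I : Type*} [CommRing k] [LieRing L]
    [LieAlgebra k L] [AddCommGroup M] [Module k M]
    (D : I → Module.End k (UniversalEnvelopingAlgebra k L ⊗[k] M))
    (h1 : ∀ i m, D i (1 ⊗ₜ[k] m) = 0)
    (hmul : ∀ (x : L) (t : UniversalEnvelopingAlgebra k L), (∀ i m, D i (t ⊗ₜ[k] m) = 0) →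
      ∀ i m, D i ((UniversalEnvelopingAlgebra.ι k x * t) ⊗ₜ[k] m) = 0) (i : I) : D i = 0 := by
  let S : Submodule k (UniversalEnvelopingAlgebra k L) :=
    { carrier := {t | ∀ i m, D i (t ⊗ₜ[k] m) = 0}
      zero_mem' := fun i m => by simp
      add_mem' := fun {a b} ha hb i m => by
        rw [TensorProduct.add_tmul, map_add, ha i m, hb i m, add_zero]
      smul_mem' := fun r a ha i m => by
        rw [← TensorProduct.smul_tmul', map_smul, ha i m, smul_zero] }
  refine TensorProduct.ext' fun t m => ?_
  exact UniversalEnvelopingAlgebra.mem_of_mul_left S h1 hmul t i m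

theorem PhiU_lie_action {k : Type*} [CommRing k] {g : Type*} [LieRing g]
    [LieAlgebra k g] (g₁ g₂ : LieSubalgebra k g)
    (hcompl : IsCompl g₁.toSubmodule g₂.toSubmodule)
    (p₁ : g →ₗ[k] g₁) (p₂ : g →ₗ[k] g₂)
    (hp : ∀ x : g, (p₁ x : g) + (p₂ x : g) = x)
    (ΦU : g →ₗ[k] Module.End k
        (UniversalEnvelopingAlgebra k g₁ ⊗[k] UniversalEnvelopingAlgebra k g₂))
    (hΦUa : ∀ (G : g) (m : UniversalEnvelopingAlgebra k g₂),
        ΦU G (1 ⊗ₜ[k] m) =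
          UniversalEnvelopingAlgebra.ι k (p₁ G) ⊗ₜ[k] m +
            1 ⊗ₜ[k] (UniversalEnvelopingAlgebra.ι k (p₂ G) * m))
    (hΦUb : ∀ (G : g) (x : g₁) (t : UniversalEnvelopingAlgebra k g₁)
        (m : UniversalEnvelopingAlgebra k g₂),
        ΦU G ((UniversalEnvelopingAlgebra.ι k x * t) ⊗ₜ[k] m) =
          ΦU ⁅G, (x : g)⁆ (t ⊗ₜ[k] m) +
            TensorProduct.map
              (LinearMap.mulLeft k (UniversalEnvelopingAlgebra.ι k x))
              LinearMap.id (ΦU G (t ⊗ₜ[k] m))) :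
    ∀ G H : g, ΦU ⁅G, H⁆ = ΦU G ∘ₗ ΦU H - ΦU H ∘ₗ ΦU G := by
  let L : g₁ → Module.End k
      (UniversalEnvelopingAlgebra k g₁ ⊗[k] UniversalEnvelopingAlgebra k g₂) := fun x =>
    TensorProduct.map (LinearMap.mulLeft k (UniversalEnvelopingAlgebra.ι k x)) LinearMap.id
  have hL : ∀ x t m, L x (t ⊗ₜ[k] m) = (UniversalEnvelopingAlgebra.ι k x * t) ⊗ₜ[k] m :=
    fun x t m => by simp [L]
  have hι₁ : ∀ x y : g₁, UniversalEnvelopingAlgebra.ι k ⁅x, y⁆ =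
      UniversalEnvelopingAlgebra.ι k x * UniversalEnvelopingAlgebra.ι k y -
        UniversalEnvelopingAlgebra.ι k y * UniversalEnvelopingAlgebra.ι k x :=
    UniversalEnvelopingAlgebra.ι_lie
  have hι₂ : ∀ x y : g₂, UniversalEnvelopingAlgebra.ι k ⁅x, y⁆ =
      UniversalEnvelopingAlgebra.ι k x * UniversalEnvelopingAlgebra.ι k y -
        UniversalEnvelopingAlgebra.ι k y * UniversalEnvelopingAlgebra.ι k x :=
    UniversalEnvelopingAlgebra.ι_lie
  have hLL : ∀ x y : g₁, L ⁅x, y⁆ = L x * L y - L y * L x := fun x y => by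
    refine TensorProduct.ext' fun t m => ?_
    simp only [LinearMap.sub_apply, Module.End.mul_apply, hL, hι₁, sub_mul,
      TensorProduct.sub_tmul, mul_assoc]
  have hcomm : ∀ (G : g) (x : g₁), ΦU G * L x = ΦU ⁅G, (x : g)⁆ + L x * ΦU G := fun G x => by
    refine TensorProduct.ext' fun t m => ?_
    rw [Module.End.mul_apply, hL, hΦUb]
    rfl
  -- Uniqueness of the decomposition identifies `p₁`, `p₂` on the two summands.
  have hdec : ∀ (x : g₁) (y : g₂), (x : g) + y = 0 → x = 0 ∧ y = 0 := fun x y h => by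
    have hx : (x : g) = 0 := by
      refine Submodule.disjoint_def.mp hcompl.disjoint _ x.2 ?_
      rw [eq_neg_of_add_eq_zero_left h]
      exact neg_mem y.2
    rw [hx, zero_add] at h
    exact ⟨Subtype.ext hx, Subtype.ext h⟩
  have hp₁ : ∀ x : g₁, p₁ x = x ∧ p₂ x = 0 := fun x => by
    have h := hdec (p₁ x - x) (p₂ x) (by
      have := hp x
      push_cast
      rw [sub_add_eq_add_sub, this, sub_self])
    exact ⟨sub_eq_zero.mp h.1, h.2⟩
  have hp₂ : ∀ y : g₂, p₁ y = 0 ∧ p₂ y = y := fun y => by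
    have h := hdec (p₁ y) (p₂ y - y) (by
      have := hp y
      push_cast
      rw [← add_sub_assoc, this, sub_self])
    exact ⟨h.1, sub_eq_zero.mp h.2⟩
  have hΦL : ∀ x : g₁, ΦU x = L x := fun x => by
    rw [← sub_eq_zero]
    refine UniversalEnvelopingAlgebra.family_eq_zero (fun x : g₁ => ΦU x - L x) ?_ ?_ x
    · intro x m
      simp [hΦUa, hL, hp₁ x]
    · intro y t ih x m
      have hE : (ΦU x - L x) * L y = (ΦU (⁅x, y⁆ : g₁) - L ⁅x, y⁆) + L y * (ΦU x - L x) := by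
        rw [sub_mul, hcomm, hLL, LieSubalgebra.coe_bracket, mul_sub]
        abel
      have := LinearMap.congr_fun hE (t ⊗ₜ[k] m)
      rw [Module.End.mul_apply, hL, LinearMap.add_apply, Module.End.mul_apply, ih, ih] at this
      simpa using this
  let D : g → g → Module.End k
      (UniversalEnvelopingAlgebra k g₁ ⊗[k] UniversalEnvelopingAlgebra k g₂) := fun G H =>
    ΦU ⁅G, H⁆ - (ΦU G * ΦU H - ΦU H * ΦU G)
  have hD₁ : ∀ (G : g) (x : g₁), D G x = 0 := fun G x => by
    simp only [D]
    rw [hΦL, hcomm]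
    noncomm_ring
  have hDswap : ∀ G H, D G H = - D H G := fun G H => by
    simp only [D]
    rw [← lie_skew G H, map_neg]
    noncomm_ring
  have hDadd : ∀ G H H', D G (H + H') = D G H + D G H' := fun G H H' => by
    simp only [D, lie_add, map_add]
    noncomm_ring
  have hD₂ : ∀ G H, D G H = D (p₂ G) (p₂ H) := fun G H => by
    conv_lhs => rw [← hp H, hDadd, hD₁, zero_add, hDswap, ← hp G, hDadd, hD₁, zero_add, ← hDswap]
  have hDL : ∀ (G H : g) (x : g₁),
      D G H * L x = L x * D G H + D G ⁅H, (x : g)⁆ - D H ⁅G, (x : g)⁆ := fun G H x => by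
    have hJ : ΦU ⁅⁅G, H⁆, (x : g)⁆ = ΦU ⁅G, ⁅H, (x : g)⁆⁆ - ΦU ⁅H, ⁅G, (x : g)⁆⁆ := by
      rw [lie_lie, map_sub]
    simp only [D]
    have e1 : ΦU G * ΦU H * L x = ΦU G * ΦU ⁅H, (x : g)⁆ +
        (ΦU ⁅G, (x : g)⁆ * ΦU H + L x * ΦU G * ΦU H) := by
      rw [mul_assoc, hcomm, mul_add, ← mul_assoc (ΦU G) (L x), hcomm, add_mul]
    have e2 : ΦU H * ΦU G * L x = ΦU H * ΦU ⁅G, (x : g)⁆ +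
        (ΦU ⁅H, (x : g)⁆ * ΦU G + L x * ΦU H * ΦU G) := by
      rw [mul_assoc, hcomm, mul_add, ← mul_assoc (ΦU H) (L x), hcomm, add_mul]
    rw [sub_mul, sub_mul, e1, e2, hcomm, hJ]
    simp only [mul_sub, mul_assoc]
    abel
  intro G H
  rw [← sub_eq_zero]
  refine UniversalEnvelopingAlgebra.family_eq_zero (fun i : g × g => D i.1 i.2) ?_ ?_ (G, H)
  · rintro ⟨G, H⟩ m
    have hΦ₂ : ∀ (y : g₂) (m : UniversalEnvelopingAlgebra k g₂),
        ΦU y (1 ⊗ₜ[k] m) = 1 ⊗ₜ[k] (UniversalEnvelopingAlgebra.ι k y * m) := fun y m => by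
      rw [hΦUa, (hp₂ y).1, (hp₂ y).2, map_zero, TensorProduct.zero_tmul, zero_add]
    show D G H (1 ⊗ₜ[k] m) = 0
    rw [hD₂]
    simp only [D]
    rw [← LieSubalgebra.coe_bracket]
    simp only [LinearMap.sub_apply, Module.End.mul_apply, hΦ₂, hι₂, sub_mul,
      TensorProduct.tmul_sub, mul_assoc, sub_self]
  · rintro x t ih ⟨G, H⟩ m
    have ih' : ∀ G H m, D G H (t ⊗ₜ[k] m) = 0 := fun G H m => ih (G, H) m
    change D G H _ = 0
    rw [← hL, ← Module.End.mul_apply, hDL]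
    change L x (D G H _) + D G _ _ - D H _ _ = 0
    rw [ih', ih', ih', map_zero, add_zero, sub_zero]
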